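/- Let λ > 0 and α, α_0, α̃, α̃_0 ∈ (0,1] with α̃/α > α̃_0/α_0. Then for every u > 0 one has lim_{t→∞} t^{−α̃/α} log ( 1/E^1_{α_0,1}(λ t^{α̃_0}) + Σ_{k≥1} (λ u t^{α̃})^k / ( Γ(αk+1) · E^1_{α,1}(λ t^{α̃}) ) ) = max{ λ^{1/α}(u^{1/α} − 1), 0 }. -/

import Mathlib

open Filter Topology

/-- The classical Mittag-Leffler function `E^1_{α,1}(u) = ∑_{k≥0} u^k / Γ(αk+1)`. -/
noncomputable def mittagLeffler (α : ℝ) (u : ℝ) : ℝ :=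
  ∑' k : ℕ, u ^ k / Real.Gamma (α * (k : ℝ) + 1)

lemma ml_gamma_lb {y s : ℝ} (hy : 0 < y) (hs : 0 ≤ s) :
    y ^ s / Real.Gamma (s + 1) ≤ Real.exp y := by
  have hG : 0 < Real.Gamma (s + 1) := Real.Gamma_pos_of_pos (by linarith)
  have key : Real.exp (-y) * y ^ s ≤ Real.Gamma (s + 1) := by
    have hint := Real.GammaIntegral_convergent (s := s + 1) (by linarith)
    rw [Real.Gamma_eq_integral (by linarith)]
    have h1 : ∫ x in Set.Ioi y, Real.exp (-x) * y ^ s = Real.exp (-y) * y ^ s := by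
      rw [MeasureTheory.integral_mul_const, integral_exp_neg_Ioi]
    rw [← h1]
    have hsub : Set.Ioi y ⊆ Set.Ioi (0:ℝ) := Set.Ioi_subset_Ioi hy.le
    calc ∫ x in Set.Ioi y, Real.exp (-x) * y ^ s
        ≤ ∫ x in Set.Ioi y, Real.exp (-x) * x ^ (s + 1 - 1) := by
          apply MeasureTheory.setIntegral_mono_on _ (hint.mono_set hsub) measurableSet_Ioi
          · intro x hx
            have hx' : y < x := hx
            rw [add_sub_cancel_right]
            have := Real.rpow_le_rpow hy.le hx'.le hs
            gcongr
          · exact (integrableOn_exp_neg_Ioi y).mul_const _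
      _ ≤ _ := by
          apply MeasureTheory.setIntegral_mono_set hint
          · filter_upwards [MeasureTheory.ae_restrict_mem measurableSet_Ioi] with x hx
            have hx' : 0 < x := hx
            simp only [Pi.zero_apply]
            positivity
          · exact hsub.eventuallyLE
  rw [div_le_iff₀ hG]
  calc y ^ s = Real.exp y * (Real.exp (-y) * y ^ s) := by
        rw [← mul_assoc, ← Real.exp_add]; simp
    _ ≤ _ := by gcongr

lemma ml_pow_eq {α x : ℝ} (hα : 0 < α) (hx : 0 < x) (k : ℕ) :
    x ^ k = (x ^ (1 / α)) ^ (α * (k:ℝ)) := by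
  rw [← Real.rpow_mul hx.le, ← Real.rpow_natCast]
  congr 1
  field_simp

lemma ml_term_le {α x ε : ℝ} (hα : 0 < α) (hx : 0 < x) (hε : 0 < ε) (k : ℕ) :
    x ^ k / Real.Gamma (α * (k:ℝ) + 1) ≤
      Real.exp ((1 + ε) * x ^ (1 / α)) * (((1 + ε) ^ α)⁻¹) ^ k := by
  have hy : 0 < x ^ (1 / α) := Real.rpow_pos_of_pos hx _
  have h := ml_gamma_lb (y := (1 + ε) * x ^ (1 / α)) (s := α * k) (by positivity) (by positivity)
  rw [Real.mul_rpow (by positivity) hy.le, ← ml_pow_eq hα hx, Real.rpow_mul (by positivity),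
    Real.rpow_natCast] at h
  have hp : 0 < ((1 + ε) ^ α) ^ k := by positivity
  rw [inv_pow, ← div_eq_mul_inv, le_div_iff₀ hp]
  calc _ = ((1 + ε) ^ α) ^ k * x ^ k / Real.Gamma (α * (k:ℝ) + 1) := by ring
    _ ≤ _ := h

lemma ml_geo {α ε : ℝ} (hα : 0 < α) (hε : 0 < ε) :
    0 ≤ ((1 + ε) ^ α)⁻¹ ∧ ((1 + ε) ^ α)⁻¹ < 1 := by
  refine ⟨by positivity, inv_lt_one_of_one_lt₀ (Real.one_lt_rpow (by linarith) hα)⟩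

lemma ml_term_nonneg {α x : ℝ} (hα : 0 < α) (hx : 0 < x) (k : ℕ) :
    0 ≤ x ^ k / Real.Gamma (α * (k:ℝ) + 1) := by
  have : 0 < Real.Gamma (α * (k:ℝ) + 1) := Real.Gamma_pos_of_pos (by positivity)
  positivity

lemma ml_summable {α x : ℝ} (hα : 0 < α) (hx : 0 < x) :
    Summable (fun k : ℕ => x ^ k / Real.Gamma (α * (k:ℝ) + 1)) := by
  have hg := ml_geo hα one_pos
  exact Summable.of_nonneg_of_le (ml_term_nonneg hα hx) (ml_term_le hα hx one_pos)
    ((summable_geometric_of_lt_one hg.1 hg.2).mul_left _)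

lemma ml_upper {α x ε : ℝ} (hα : 0 < α) (hx : 0 < x) (hε : 0 < ε) :
    mittagLeffler α x ≤ Real.exp ((1 + ε) * x ^ (1 / α)) * (1 - ((1 + ε) ^ α)⁻¹)⁻¹ := by
  have hg := ml_geo hα hε
  rw [← tsum_geometric_of_lt_one hg.1 hg.2, ← tsum_mul_left]
  exact (ml_summable hα hx).tsum_le_tsum (ml_term_le hα hx hε)
    ((summable_geometric_of_lt_one hg.1 hg.2).mul_left _)

lemma ml_lower {α x : ℝ} (hα : 0 < α) (hα1 : α ≤ 1) (hx : 1 ≤ x) :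
    Real.exp (x ^ (1 / α)) ≤ 1 + x ^ (1 / α) * mittagLeffler α x := by
  have hx0 : 0 < x := by linarith
  set y := x ^ (1 / α) with hy
  have hy1 : 1 ≤ y := Real.one_le_rpow hx (by positivity)
  have hexp : HasSum (fun n : ℕ => y ^ n / (n.factorial : ℝ)) (Real.exp y) := by
    rw [Real.exp_eq_exp_ℝ]
    exact NormedSpace.expSeries_div_hasSum_exp y
  have hs1 : Summable (fun n : ℕ => y ^ (n + 1) / ((n + 1).factorial : ℝ)) :=
    (summable_nat_add_iff 1).2 hexp.summable
  have h0 : Real.exp y = 1 + ∑' n : ℕ, y ^ (n + 1) / ((n + 1).factorial : ℝ) := by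
    rw [← hexp.tsum_eq, hexp.summable.tsum_eq_zero_add]; simp
  rw [h0]
  gcongr
  unfold mittagLeffler
  rw [← tsum_mul_left]
  have hmono : StrictMono (fun n : ℕ => ⌈(n:ℝ) / α⌉₊) := by
    apply strictMono_nat_of_lt_succ
    intro n
    have h1 : (1:ℝ) ≤ 1 / α := by rw [le_div_iff₀ hα]; linarith
    rw [Nat.lt_iff_add_one_le, ← Nat.ceil_add_one (by positivity)]
    apply Nat.ceil_mono
    push_cast
    rw [add_div]; linarith
  refine Summable.tsum_le_tsum_of_inj (fun n : ℕ => ⌈(n:ℝ) / α⌉₊) hmono.injective ?_ ?_ hs1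
    ((ml_summable hα hx0).mul_left _)
  · intro c _
    have := ml_term_nonneg hα hx0 c
    positivity
  · intro n
    set k := ⌈(n:ℝ) / α⌉₊ with hk
    have hk1 : (n:ℝ) ≤ α * k := by
      have := Nat.le_ceil ((n:ℝ) / α)
      rw [div_le_iff₀ hα] at this
      linarith
    have hk2 : α * k ≤ n + 1 := by
      have := (Nat.ceil_lt_add_one (a := (n:ℝ) / α) (by positivity)).le
      calc α * k ≤ α * ((n:ℝ) / α + 1) := by gcongr
        _ = n + α := by field_simp
        _ ≤ _ := by linarith
    have hG : 0 < Real.Gamma (α * (k:ℝ) + 1) := Real.Gamma_pos_of_pos (by positivity)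
    have hGle : Real.Gamma (α * (k:ℝ) + 1) ≤ (n + 1).factorial := by
      rcases Nat.eq_zero_or_pos n with h | h
      · have : k = 0 := by simp [hk, h]
        simp [this, h]
      · rw [← Real.Gamma_nat_eq_factorial]
        have h1 : (1:ℝ) ≤ n := by exact_mod_cast h
        apply Real.Gamma_strictMonoOn_Ici.monotoneOn
        · simp only [Set.mem_Ici]; linarith
        · simp only [Set.mem_Ici]; push_cast; linarith
        · push_cast; linarith
    have hpow : y ^ n ≤ x ^ k := by
      rw [ml_pow_eq hα hx0 k, ← hy, ← Real.rpow_natCast]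
      exact Real.rpow_le_rpow_of_exponent_le hy1 hk1
    calc y ^ (n + 1) / ((n + 1).factorial : ℝ) = y * (y ^ n / ((n + 1).factorial : ℝ)) := by ring
      _ ≤ y * (x ^ k / Real.Gamma (α * (k:ℝ) + 1)) := by gcongr

lemma ml_asymp {α : ℝ} (hα : 0 < α) (hα1 : α ≤ 1) :
    Tendsto (fun x => Real.log (mittagLeffler α x) / x ^ (1 / α)) atTop (𝓝 1) ∧
    Tendsto (fun x => Real.log (mittagLeffler α x - 1) / x ^ (1 / α)) atTop (𝓝 1) ∧
    (∀ᶠ x in atTop, 2 ≤ mittagLeffler α x) := by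
  have hyt : Tendsto (fun x : ℝ => x ^ (1 / α)) atTop atTop := tendsto_rpow_atTop (by positivity)
  have hge2 : ∀ᶠ x in atTop, 2 ≤ mittagLeffler α x := by
    filter_upwards [hyt.eventually_ge_atTop 2, eventually_ge_atTop 1] with x h2 hx
    have h := ml_lower hα hα1 hx
    have hq := Real.quadratic_le_exp_of_nonneg (x := x ^ (1 / α)) (by linarith)
    by_contra! hc
    nlinarith
  have hlow : ∀ᶠ x in atTop, 1 - Real.log (4 * x ^ (1 / α)) / x ^ (1 / α) ≤
      Real.log (mittagLeffler α x - 1) / x ^ (1 / α) := by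
    filter_upwards [hyt.eventually_ge_atTop 2, eventually_ge_atTop 1, hge2] with x h2 hx hE
    have h := ml_lower hα hα1 hx
    have hy0 : 0 < x ^ (1 / α) := by linarith
    have h4 : Real.exp (x ^ (1 / α)) ≤ (4 * x ^ (1 / α)) * (mittagLeffler α x - 1) := by nlinarith
    have h5 := Real.log_le_log (Real.exp_pos _) h4
    rw [Real.log_exp, Real.log_mul (by positivity) (by linarith)] at h5
    rw [le_div_iff₀ hy0, sub_mul, div_mul_cancel₀ _ hy0.ne']
    linarith
  have hmid : ∀ᶠ x in atTop, Real.log (mittagLeffler α x - 1) / x ^ (1 / α) ≤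
      Real.log (mittagLeffler α x) / x ^ (1 / α) := by
    filter_upwards [hyt.eventually_ge_atTop 2, hge2] with x h2 hE
    have := Real.log_le_log (x := mittagLeffler α x - 1) (y := mittagLeffler α x)
      (by linarith) (by linarith)
    gcongr
  have hlowt : Tendsto (fun x : ℝ => 1 - Real.log (4 * x ^ (1 / α)) / x ^ (1 / α)) atTop (𝓝 1) := by
    have h1 : Tendsto (fun y : ℝ => Real.log y / y) atTop (𝓝 0) :=
      Real.isLittleO_log_id_atTop.tendsto_div_nhds_zero
    have h2 := (h1.comp (hyt.const_mul_atTop (by norm_num : (0:ℝ) < 4))).const_mul 4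
    have h3 := h2.const_sub 1
    simp only [mul_zero, sub_zero] at h3
    refine h3.congr fun x => ?_
    simp only [Function.comp]
    congr 1
    by_cases h : x ^ (1 / α) = 0
    · rw [h]; simp
    · field_simp
  have hup : ∀ δ : ℝ, 1 < δ → ∀ᶠ x in atTop, Real.log (mittagLeffler α x) / x ^ (1 / α) < δ := by
    intro δ hδ
    obtain ⟨ε, hε, hεδ⟩ : ∃ ε : ℝ, 0 < ε ∧ 1 + ε < δ := ⟨(δ - 1) / 2, by linarith, by linarith⟩
    have hg := ml_geo hα hε
    set C := (1 - ((1 + ε) ^ α)⁻¹)⁻¹ with hC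
    have hC0 : 0 < C := inv_pos.2 (by linarith [hg.2])
    filter_upwards [hyt.eventually_gt_atTop (Real.log C / (δ - 1 - ε)),
      hyt.eventually_gt_atTop 0, eventually_gt_atTop 0, hge2] with x h1 h2 hx hE
    have h := Real.log_le_log (by linarith) (ml_upper hα hx hε)
    rw [Real.log_mul (Real.exp_pos _).ne' hC0.ne', Real.log_exp] at h
    rw [div_lt_iff₀ (by linarith)] at h1
    rw [div_lt_iff₀ h2]
    nlinarith
  refine ⟨?_, ?_, hge2⟩
  · rw [tendsto_order]
    refine ⟨fun a ha => ?_, hup⟩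
    filter_upwards [hlow, hmid, hlowt.eventually (lt_mem_nhds ha)] with x h1 h2 h3
    linarith
  · rw [tendsto_order]
    refine ⟨fun a ha => ?_, fun δ hδ => ?_⟩
    · filter_upwards [hlow, hlowt.eventually (lt_mem_nhds ha)] with x h1 h3
      linarith
    · filter_upwards [hmid, hup δ hδ] with x h1 h3
      linarith

lemma ml_scale {f : ℝ → ℝ} {a : ℝ} (ha : 0 < a)
    (hf : Tendsto (fun x => Real.log (f x) / x ^ (1 / a)) atTop (𝓝 1))
    {c p r l : ℝ} (hc : 0 < c) (hp : 0 < p)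
    (hl : Tendsto (fun t : ℝ => c ^ (1 / a) * t ^ (p / a - r)) atTop (𝓝 l)) :
    Tendsto (fun t : ℝ => t ^ (-r) * Real.log (f (c * t ^ p))) atTop (𝓝 l) := by
  have hx : Tendsto (fun t : ℝ => c * t ^ p) atTop atTop := (tendsto_rpow_atTop hp).const_mul_atTop hc
  have h := hl.mul (hf.comp hx)
  rw [mul_one] at h
  refine h.congr' ?_
  filter_upwards [eventually_gt_atTop 0] with t ht
  simp only [Function.comp]
  have h1 : (c * t ^ p) ^ (1 / a) = c ^ (1 / a) * t ^ (p / a) := by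
    rw [Real.mul_rpow hc.le (by positivity), ← Real.rpow_mul ht.le]
    congr 2; ring
  have h2 : t ^ (p / a - r) = t ^ (p / a) * t ^ (-r) := by
    rw [← Real.rpow_add ht]; rfl
  have h3 : 0 < t ^ (p / a) := by positivity
  have h4 : 0 < c ^ (1 / a) := by positivity
  rw [h1, h2]
  field_simp

/-- Lemma 4.1 of the paper: for `λ > 0` and `α, α_0, α̃, α̃_0 ∈ (0,1]` with `α̃/α > α̃_0/α_0`,
for every `u > 0`,
`t^{-α̃/α} log( 1/E^1_{α_0,1}(λt^{α̃_0}) + Σ_{k≥1} (λut^{α̃})^k/(Γ(αk+1) E^1_{α,1}(λt^{α̃})) )`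
tends to `max{λ^{1/α}(u^{1/α}-1), 0}` as `t → ∞`. -/
theorem lemma_for_counterexample
    (lam α α0 αt αt0 : ℝ) (hlam : 0 < lam)
    (hα : α ∈ Set.Ioc (0 : ℝ) 1) (hα0 : α0 ∈ Set.Ioc (0 : ℝ) 1)
    (hαt : αt ∈ Set.Ioc (0 : ℝ) 1) (hαt0 : αt0 ∈ Set.Ioc (0 : ℝ) 1)
    (hcase : αt0 / α0 < αt / α) :
    ∀ u : ℝ, 0 < u →
      Tendsto (fun t : ℝ => t ^ (-(αt / α)) *
          Real.log (1 / mittagLeffler α0 (lam * t ^ αt0) +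
            ∑' k : ℕ, (lam * u * t ^ αt) ^ (k + 1)
              / (Real.Gamma (α * ((k : ℝ) + 1) + 1) * mittagLeffler α (lam * t ^ αt))))
        atTop (𝓝 (max (lam ^ (1 / α) * (u ^ (1 / α) - 1)) 0)) := by
  intro u hu
  obtain ⟨hα, hα1⟩ := hα
  obtain ⟨hα0, hα01⟩ := hα0
  obtain ⟨hαt, -⟩ := hαt
  obtain ⟨hαt0, -⟩ := hαt0
  obtain ⟨hL, hL1, hE⟩ := ml_asymp hα hα1
  obtain ⟨hL0, -, hE0⟩ := ml_asymp hα0 hα01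
  have hr : 0 < αt / α := by positivity
  have hT0 := ml_scale hα0 hL0 hlam hαt0 (r := αt / α) (l := 0) (by
    have := (tendsto_rpow_neg_atTop (sub_pos.2 hcase)).const_mul (lam ^ (1 / α0))
    simpa using this)
  have hT1 := ml_scale hα hL hlam hαt (r := αt / α) (l := lam ^ (1 / α)) (by simp)
  have hT2 := ml_scale (f := fun x => mittagLeffler α x - 1) hα hL1 (mul_pos hlam hu) hαt
    (r := αt / α) (l := (lam * u) ^ (1 / α)) (by simp)
  have hx1 : Tendsto (fun t : ℝ => lam * t ^ αt) atTop atTop :=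
    (tendsto_rpow_atTop hαt).const_mul_atTop hlam
  have hx2 : Tendsto (fun t : ℝ => lam * u * t ^ αt) atTop atTop :=
    (tendsto_rpow_atTop hαt).const_mul_atTop (mul_pos hlam hu)
  have hx0 : Tendsto (fun t : ℝ => lam * t ^ αt0) atTop atTop :=
    (tendsto_rpow_atTop hαt0).const_mul_atTop hlam
  have hM : Tendsto (fun t : ℝ => max
      (t ^ (-(αt / α)) * Real.log (mittagLeffler α (lam * u * t ^ αt) - 1)
        - t ^ (-(αt / α)) * Real.log (mittagLeffler α (lam * t ^ αt)))
      (-(t ^ (-(αt / α)) * Real.log (mittagLeffler α0 (lam * t ^ αt0))))) atTop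
      (𝓝 (max (lam ^ (1 / α) * (u ^ (1 / α) - 1)) 0)) := by
    have := (hT2.sub hT1).max hT0.neg
    rw [Real.mul_rpow hlam.le hu.le, neg_zero] at this
    rw [mul_sub, mul_one]
    exact this
  have hM2 := ((tendsto_rpow_neg_atTop hr).mul_const (Real.log 2)).add hM
  rw [zero_mul, zero_add] at hM2
  have hbd : ∀ᶠ t : ℝ in atTop, 0 < t ∧ 2 ≤ mittagLeffler α (lam * t ^ αt) ∧
      2 ≤ mittagLeffler α (lam * u * t ^ αt) ∧ 2 ≤ mittagLeffler α0 (lam * t ^ αt0) := by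
    filter_upwards [eventually_gt_atTop 0, hx1.eventually hE, hx2.eventually hE,
      hx0.eventually hE0] with t h1 h2 h3 h4 using ⟨h1, h2, h3, h4⟩
  have hsum : ∀ t : ℝ, 0 < t → ∑' k : ℕ, (lam * u * t ^ αt) ^ (k + 1)
      / (Real.Gamma (α * ((k : ℝ) + 1) + 1) * mittagLeffler α (lam * t ^ αt)) =
      (mittagLeffler α (lam * u * t ^ αt) - 1) / mittagLeffler α (lam * t ^ αt) := by
    intro t ht
    have hs := ml_summable hα (x := lam * u * t ^ αt) (by positivity)
    have h1 : mittagLeffler α (lam * u * t ^ αt) - 1 =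
        ∑' k : ℕ, (lam * u * t ^ αt) ^ (k + 1) / Real.Gamma (α * ((k : ℝ) + 1) + 1) := by
      unfold mittagLeffler
      rw [hs.tsum_eq_zero_add]
      simp
    rw [h1, ← tsum_div_const]
    simp only [div_div]
  have hlog : ∀ a b c : ℝ, 0 < a → 0 < b → 0 < c →
      max (c * Real.log b) (c * Real.log a) ≤ c * Real.log (a + b) ∧
      c * Real.log (a + b) ≤ c * Real.log 2 + max (c * Real.log b) (c * Real.log a) := by
    intro a b c ha hb hc
    constructor
    · apply max_le
      · exact mul_le_mul_of_nonneg_left (Real.log_le_log hb (by linarith)) hc.le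
      · exact mul_le_mul_of_nonneg_left (Real.log_le_log ha (by linarith)) hc.le
    · rcases le_total a b with h | h
      · have h1 := Real.log_le_log (add_pos ha hb) (show a + b ≤ 2 * b by linarith)
        rw [Real.log_mul two_ne_zero hb.ne'] at h1
        have h2 := le_max_left (c * Real.log b) (c * Real.log a)
        nlinarith
      · have h1 := Real.log_le_log (add_pos ha hb) (show a + b ≤ 2 * a by linarith)
        rw [Real.log_mul two_ne_zero ha.ne'] at h1
        have h2 := le_max_right (c * Real.log b) (c * Real.log a)
        nlinarith
  refine tendsto_of_tendsto_of_tendsto_of_le_of_le' hM hM2 ?_ ?_ <;>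
  · filter_upwards [hbd] with t ht
    obtain ⟨h1, h2, h3, h4⟩ := ht
    have := hlog (1 / mittagLeffler α0 (lam * t ^ αt0))
      ((mittagLeffler α (lam * u * t ^ αt) - 1) / mittagLeffler α (lam * t ^ αt))
      (t ^ (-(αt / α))) (by positivity) (div_pos (by linarith) (by linarith)) (by positivity)
    have e1 : Real.log ((mittagLeffler α (lam * u * t ^ αt) - 1) / mittagLeffler α (lam * t ^ αt))
        = Real.log (mittagLeffler α (lam * u * t ^ αt) - 1)
          - Real.log (mittagLeffler α (lam * t ^ αt)) :=
      Real.log_div (by linarith) (by linarith)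
    have e2 : Real.log (1 / mittagLeffler α0 (lam * t ^ αt0)) =
        - Real.log (mittagLeffler α0 (lam * t ^ αt0)) := by rw [one_div, Real.log_inv]
    rw [e1, e2, mul_sub, mul_neg, ← hsum t h1] at this
    first | exact this.1 | exact this.2
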